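/- Let q be a prime power with q ≥ 5 and let P be a closed point of degree 3 of P² over F_q not contained in any F_q-rational line, given by a point p ∈ P²(F_{q³}) whose Frobenius orbit {p, φ(p), φ²(p)} has exactly 3 elements, these three points being non-collinear. Then for every nonzero homogeneous polynomial f ∈ F_q[x,y,z] of degree 5 vanishing at p, the number of points [a:b:c] ∈ P²(F_q) with f(a,b,c) = 0 is at most 4q + 2. -/

import Mathlib

open MvPolynomial

noncomputable section

section Comb
open Configuration Finset
open scoped Classical

variable {P L : Type} [Membership P L] [ProjectivePlane P L] [Fintype P] [Fintype L]

/-- The number of points of `K` on `l`. -/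
def cnt (K : Finset P) (l : L) : ℕ := (K.filter (fun x => x ∈ l)).card

/-- lines through a point -/
def linesAt (L : Type) [Membership P L] [Fintype L] (A : P) : Finset L :=
  univ.filter (fun l : L => A ∈ l)

lemma card_linesAt (A : P) : (linesAt L A).card = ProjectivePlane.order P L + 1 := by
  rw [← ProjectivePlane.lineCount_eq (L := L) A, lineCount, Nat.card_eq_fintype_card,
    Fintype.card_subtype, linesAt]

lemma sum_lines_le (K : Finset P) (A : P) :
    K.card ≤ ∑ l ∈ linesAt L A, cnt K l := by
  have h : K ⊆ (linesAt L A).biUnion (fun l => K.filter (fun x => x ∈ l)) := by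
    intro x hx
    simp only [mem_biUnion, mem_filter, linesAt, mem_univ, true_and]
    by_cases hxA : x = A
    · subst hxA
      have : 0 < (linesAt L x).card := by rw [card_linesAt]; omega
      obtain ⟨l, hl⟩ := card_pos.1 this
      simp only [linesAt, mem_filter, mem_univ, true_and] at hl
      exact ⟨l, hl, hx, hl⟩
    · exact ⟨HasLines.mkLine hxA, (HasLines.mkLine_ax hxA).2, hx, (HasLines.mkLine_ax hxA).1⟩
  exact (card_le_card h).trans card_biUnion_le

lemma sum_lines (K : Finset P) (A : P) (hA : A ∈ K) :
    ∑ l ∈ linesAt L A, cnt K l = K.card + ProjectivePlane.order P L := by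
  have h1 : ∀ l ∈ linesAt L A, cnt K l = cnt (K.erase A) l + 1 := by
    intro l hl
    simp only [linesAt, mem_filter, mem_univ, true_and] at hl
    unfold cnt
    rw [filter_erase, card_erase_add_one]
    simp [hA, hl]
  rw [sum_congr rfl h1, sum_add_distrib, sum_const, card_linesAt]
  have h2 : (K.erase A).card = ∑ l ∈ linesAt L A, cnt (K.erase A) l := by
    unfold cnt
    rw [← card_biUnion]
    · congr 1
      ext x
      simp only [mem_biUnion, mem_filter, linesAt, mem_univ, true_and, mem_erase]
      constructor
      · rintro ⟨hxA, hx⟩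
        exact ⟨HasLines.mkLine hxA, (HasLines.mkLine_ax hxA).2, ⟨hxA, hx⟩,
          (HasLines.mkLine_ax hxA).1⟩
      · rintro ⟨l, _, h, _⟩
        exact h
    · intro l hl m hm hlm
      simp only [linesAt, mem_filter, mem_univ, true_and, coe_filter, Set.mem_ofPred_eq] at hl hm
      rw [Function.onFun, disjoint_left]
      intro x hx hx'
      simp only [mem_filter, mem_erase] at hx hx'
      exact (Nondegenerate.eq_or_eq hx.2 hl hx'.2 hm).elim hx.1.1 hlm
  have := card_erase_add_one hA
  simp only [smul_eq_mul, mul_one]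
  omega

/-- Main combinatorial lemma. -/
lemma comb (K : Finset P) (T : P → L) (d q : ℕ) (hq : q = ProjectivePlane.order P L)
    (hne : K.Nonempty)
    (hT : ∀ A ∈ K, A ∈ T A)
    (hc : ∀ l : L, cnt K l + (K.filter (fun x => T x = l)).card ≤ d)
    (hd : 2 ≤ d ∧ d ≤ 5)
    (hN : (d - 1) * q + d ≤ K.card + 2)
    (hN2 : d = 2 → q + 2 ≤ K.card) (hN3 : d = 3 → 2 * q + 2 ≤ K.card) :
    d = 4 ∧ K.card = 3 * q + 2 ∧ ∀ A ∈ K, cnt K (T A) = 2 ∧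
      ∀ B ∈ K, B ∈ T A → T B = T A := by
  -- deficiency
  set e : L → ℕ := fun l => d - cnt K l with he
  have hce : ∀ l, cnt K l + e l = d := fun l => by
    have := hc l
    simp only [he]; omega
  obtain ⟨δ, hδ⟩ : ∃ δ, K.card + q + δ = d * (q + 1) ∧ ∀ A ∈ K, ∑ l ∈ linesAt L A, e l = δ := by
    have key : ∀ A ∈ K, K.card + q + ∑ l ∈ linesAt L A, e l = d * (q + 1) := by
      intro A hA
      rw [hq, ← sum_lines K A hA, ← sum_add_distrib, sum_congr rfl (fun l _ => hce l), sum_const,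
        card_linesAt, smul_eq_mul, mul_comm]
    obtain ⟨A, hA⟩ := hne
    refine ⟨_, key A hA, fun B hB => ?_⟩
    have := key A hA
    have := key B hB
    omega
  obtain ⟨hδ1, hδ⟩ := hδ
  have hmemT : ∀ A ∈ K, T A ∈ linesAt L A := fun A hA => by simp [linesAt, hT A hA]
  have hle : ∀ A ∈ K, ∀ l, A ∈ l → e l ≤ δ := by
    intro A hA l hl
    rw [← hδ A hA]
    exact single_le_sum (f := e) (fun _ _ => Nat.zero_le _) (by simp [linesAt, hl])
  have hpair : ∀ A ∈ K, ∀ l m, A ∈ l → A ∈ m → l ≠ m → e l + e m ≤ δ := by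
    intro A hA l m hl hm hlm
    rw [← hδ A hA, ← sum_pair hlm (f := e)]
    apply sum_le_sum_of_subset
    intro x hx
    simp only [mem_insert, mem_singleton] at hx
    rcases hx with rfl | rfl <;> simp [linesAt, hl, hm]
  have hτ : ∀ A ∈ K, 1 ≤ (K.filter (fun x => T x = T A)).card := fun A hA =>
    card_pos.2 ⟨A, by simp [hA]⟩
  have he1 : ∀ A ∈ K, 1 ≤ e (T A) := by
    intro A hA
    have h1 := hce (T A)
    have h2 := hc (T A)
    have h3 := hτ A hA
    omega
  have hsat : ∀ A ∈ K, e (T A) = δ → (∀ B ∈ K, B ∈ T A → T B = T A) ∧ d ≤ 2 * δ := by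
    intro A hA hAδ
    have h1 : ∀ B ∈ K, B ∈ T A → T B = T A := by
      intro B hB hBA
      by_contra hne
      have := hpair B hB _ _ (hT B hB) hBA hne
      have := he1 B hB
      omega
    refine ⟨h1, ?_⟩
    have h2 : cnt K (T A) ≤ (K.filter (fun x => T x = T A)).card := by
      apply card_le_card
      intro B hB
      simp only [mem_filter] at hB ⊢
      exact ⟨hB.1, h1 B hB.1 hB.2⟩
    have := hc (T A)
    have := hce (T A)
    omega
  have hδ2 : δ ≤ 2 ∧ (d = 2 → δ ≤ 0) ∧ (d = 3 → δ ≤ 1) := by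
    obtain ⟨h2, h5⟩ := hd
    interval_cases d <;> omega
  have hδpos : 1 ≤ δ := by
    obtain ⟨A, hA⟩ := hne
    exact (he1 A hA).trans (hle A hA _ (hT A hA))
  -- now `δ = 2` is forced
  have hδeq : δ = 2 := by
    by_contra hne2
    obtain ⟨A, hA⟩ := hne
    have := he1 A hA
    have := hle A hA _ (hT A hA)
    have := (hsat A hA (by omega)).2
    omega
  have hd4 : 4 ≤ d := by
    by_contra h
    have : d = 2 ∨ d = 3 := by omega
    omega
  -- double count
  have hK2 : ∀ A ∈ K, e (T A) = 2 := by
    set K2 := K.filter (fun A => e (T A) = 1) with hK2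
    set L1 : Finset L := univ.filter (fun l => e l = 1) with hL1
    have hcard : K2.card ≤ L1.card := by
      apply card_le_card_of_injOn T
      · intro A hA
        simp only [hK2, coe_filter, Set.mem_ofPred_eq] at hA
        simp [hL1, hA.2]
      · intro A hA B hB hAB
        simp only [hK2, coe_filter, Set.mem_ofPred_eq] at hA hB
        have h1 := hc (T A)
        have h2 := hce (T A)
        have h3 : (K.filter (fun x => T x = T A)).card ≤ 1 := by omega
        exact card_le_one.1 h3 A (by simp [hA.1]) B (by simp [hB.1, hAB])
    have hdc := sum_card_bipartiteAbove_eq_sum_card_bipartiteBelow (s := K) (t := L1)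
      (fun (A : P) (l : L) => A ∈ l)
    have hR : ∀ l ∈ L1, (bipartiteBelow (fun (A : P) (l : L) => A ∈ l) K l).card = d - 1 := by
      intro l hl
      simp only [hL1, mem_filter, mem_univ, true_and] at hl
      have := hce l
      have h : (bipartiteBelow (fun (A : P) (l : L) => A ∈ l) K l).card = cnt K l := rfl
      omega
    have hLft : ∀ A ∈ K, (bipartiteAbove (fun (A : P) (l : L) => A ∈ l) L1 A).card ≤
        if e (T A) = 1 then 2 else 0 := by
      intro A hA
      have hsum : (bipartiteAbove (fun (A : P) (l : L) => A ∈ l) L1 A).card ≤ 2 := by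
        rw [← hδeq, ← hδ A hA, card_eq_sum_ones]
        calc ∑ x ∈ bipartiteAbove (fun (A : P) (l : L) => A ∈ l) L1 A, 1
            = ∑ x ∈ bipartiteAbove (fun (A : P) (l : L) => A ∈ l) L1 A, e x := by
              apply sum_congr rfl
              intro l hl
              simp only [mem_bipartiteAbove, hL1, mem_filter] at hl
              exact hl.1.2.symm
          _ ≤ _ := by
              apply sum_le_sum_of_subset
              intro l hl
              simp only [mem_bipartiteAbove] at hl
              simp [linesAt, hl.2]
      split_ifs with h
      · exact hsum
      · rw [Nat.le_zero, card_eq_zero, eq_empty_iff_forall_notMem]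
        intro l hl
        simp only [mem_bipartiteAbove, hL1, mem_filter, mem_univ, true_and] at hl
        have h1 := he1 A hA
        have hne : T A ≠ l := by
          rintro rfl; exact h hl.1
        have := hpair A hA _ _ (hT A hA) hl.2 hne
        omega
    rw [sum_congr rfl hR, sum_const, smul_eq_mul] at hdc
    have h5 := sum_le_sum hLft
    rw [hdc, ← sum_filter, sum_const, smul_eq_mul] at h5
    have h6 : K2.card = 0 := by
      by_contra h0
      have h7 : L1.card * 3 ≤ L1.card * (d - 1) := Nat.mul_le_mul_left _ (by omega)
      change _ ≤ K2.card * 2 at h5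
      omega
    intro A hA
    have h8 : A ∉ K2 := by rw [card_eq_zero.1 h6]; simp
    have h9 := he1 A hA
    have h10 := hle A hA _ (hT A hA)
    simp only [hK2, mem_filter, not_and] at h8
    have := h8 hA
    omega
  have hdeq : d = 4 := by
    obtain ⟨A, hA⟩ := hne
    have := (hsat A hA (by rw [hK2 A hA, hδeq])).2
    omega
  subst hdeq
  refine ⟨rfl, by omega, fun A hA => ⟨?_, (hsat A hA (by rw [hK2 A hA, hδeq])).1⟩⟩
  have := hK2 A hA
  have := hce (T A)
  omega

end Comb

section Poly
open Polynomial in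
/-- restriction of `f` to the line `a + t b`. -/
def restr {F : Type} [Field F] (f : MvPolynomial (Fin 3) F) (a b : Fin 3 → F) : Polynomial F :=
  MvPolynomial.aeval (fun i => Polynomial.C (a i) + Polynomial.C (b i) * Polynomial.X) f

variable {F : Type} [Field F]

/-- gradient -/
def grad (f : MvPolynomial (Fin 3) F) (a : Fin 3 → F) : Fin 3 → F :=
  fun i => MvPolynomial.eval a (pderiv i f)

lemma restr_eval (f : MvPolynomial (Fin 3) F) (a b : Fin 3 → F) (t : F) :
    (restr f a b).eval t = MvPolynomial.eval (a + t • b) f := by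
  unfold restr
  induction f using MvPolynomial.induction_on with
  | C c => simp [Polynomial.algebraMap_eq]
  | add p q hp hq => simp [hp, hq]
  | mul_X p i hp =>
    simp only [map_mul, Polynomial.eval_mul, hp]
    simp [mul_comm t]

lemma restr_deriv (f : MvPolynomial (Fin 3) F) (a b : Fin 3 → F) :
    Polynomial.derivative (restr f a b) = ∑ i, Polynomial.C (b i) * restr (pderiv i f) a b := by
  unfold restr
  induction f using MvPolynomial.induction_on with
  | C c => simp [Polynomial.algebraMap_eq]
  | add p q hp hq => simp only [map_add, hp, hq, mul_add, Finset.sum_add_distrib]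
  | mul_X p i hp =>
    simp only [map_mul, MvPolynomial.aeval_X, Polynomial.derivative_mul, hp, Derivation.leibniz,
      smul_eq_mul, map_add, pderiv_X, mul_add, Finset.sum_add_distrib, Finset.sum_mul]
    have hsingle : ∀ x : Fin 3, (Pi.single (M := fun _ => MvPolynomial (Fin 3) F) x 1 i) =
        if i = x then 1 else 0 := fun x => by simp [Pi.single_apply]
    have h1 : ∀ (c : Polynomial F), (∑ x, Polynomial.C (b x) *
        (c * MvPolynomial.aeval (fun i => Polynomial.C (a i) + Polynomial.C (b i) * Polynomial.X)
          (Pi.single (M := fun _ => MvPolynomial (Fin 3) F) x 1 i))) = Polynomial.C (b i) * c := by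
      intro c
      rw [Finset.sum_eq_single i]
      · simp
      · intro j _ hj
        rw [hsingle, if_neg hj.symm]
        simp
      · simp
    rw [h1]
    simp only [Polynomial.derivative_C, Polynomial.derivative_X, zero_mul, mul_zero, mul_one,
      zero_add, add_zero]
    rw [Fin.sum_univ_three, Fin.sum_univ_three, Fin.sum_univ_three]
    ring

lemma restr_deriv_eval (f : MvPolynomial (Fin 3) F) (a b : Fin 3 → F) (t : F) :
    (Polynomial.derivative (restr f a b)).eval t = grad f (a + t • b) ⬝ᵥ b := by
  rw [restr_deriv, Polynomial.eval_finsetSum]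
  simp only [Polynomial.eval_mul, Polynomial.eval_C, restr_eval, dotProduct, grad, mul_comm]

lemma restr_deg (f : MvPolynomial (Fin 3) F) (a b : Fin 3 → F) (d : ℕ) (hf : f.IsHomogeneous d) :
    (restr f a b).natDegree ≤ d ∧ (restr f a b).coeff d = MvPolynomial.eval b f := by
  have h1 : restr f a b = ∑ m ∈ f.support, Polynomial.C (f.coeff m) *
      ∏ i, (Polynomial.C (a i) + Polynomial.C (b i) * Polynomial.X) ^ m i := by
    unfold restr
    rw [MvPolynomial.aeval_def, MvPolynomial.eval₂_eq']
    rfl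
  have hlin : ∀ i, (Polynomial.C (a i) + Polynomial.C (b i) * Polynomial.X).natDegree ≤ 1 := by
    intro i
    rw [add_comm]
    exact Polynomial.natDegree_linear_le
  have hsum : ∀ m ∈ f.support, ∑ i, m i = d := by
    intro m hm
    have := hf.degree_eq_sum_deg_support hm
    rw [this]
    exact (Finset.sum_subset (Finset.subset_univ _) (fun i _ hi => by simpa using hi)).symm
  have hprod : ∀ m ∈ f.support,
      (∏ i, (Polynomial.C (a i) + Polynomial.C (b i) * Polynomial.X) ^ m i).natDegree ≤ d ∧
      (∏ i, (Polynomial.C (a i) + Polynomial.C (b i) * Polynomial.X) ^ m i).coeff d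
        = ∏ i, b i ^ m i := by
    intro m hm
    have hp : ∀ i, ((Polynomial.C (a i) + Polynomial.C (b i) * Polynomial.X) ^ m i).natDegree ≤ m i
        ∧ ((Polynomial.C (a i) + Polynomial.C (b i) * Polynomial.X) ^ m i).coeff (m i)
          = b i ^ m i := by
      intro i
      constructor
      · simpa using Polynomial.natDegree_pow_le_of_le (m i) (hlin i)
      · have := Polynomial.coeff_pow_of_natDegree_le (m := m i) (hlin i)
        simpa using this
    have := hsum m hm
    rw [Fin.sum_univ_three] at this
    rw [Fin.prod_univ_three, Fin.prod_univ_three]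
    have h01 := Polynomial.natDegree_mul_le_of_le (hp 0).1 (hp 1).1
    rw [← this]
    refine ⟨Polynomial.natDegree_mul_le_of_le h01 (hp 2).1, ?_⟩
    rw [Polynomial.coeff_mul_add_eq_of_natDegree_le h01 (hp 2).1,
      Polynomial.coeff_mul_add_eq_of_natDegree_le (hp 0).1 (hp 1).1, (hp 0).2, (hp 1).2, (hp 2).2]
  rw [h1]
  constructor
  · apply Polynomial.natDegree_sum_le_of_forall_le
    intro m hm
    exact (Polynomial.natDegree_C_mul_le _ _).trans (hprod m hm).1
  · rw [Polynomial.finsetSum_coeff, MvPolynomial.eval_eq']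
    apply Finset.sum_congr rfl
    intro m hm
    rw [Polynomial.coeff_C_mul, (hprod m hm).2]

lemma hom_eval (f : MvPolynomial (Fin 3) F) (d : ℕ) (hf : f.IsHomogeneous d) (s : F)
    (a : Fin 3 → F) : MvPolynomial.eval (s • a) f = s ^ d * MvPolynomial.eval a f := by
  rw [MvPolynomial.eval_eq', MvPolynomial.eval_eq', Finset.mul_sum]
  apply Finset.sum_congr rfl
  intro m hm
  have : ∑ i, m i = d := by
    have := hf.degree_eq_sum_deg_support hm
    rw [this]
    exact (Finset.sum_subset (Finset.subset_univ _) (fun i _ hi => by simpa using hi)).symm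
  rw [← this]
  simp only [Fin.prod_univ_three, Fin.sum_univ_three, Pi.smul_apply, smul_eq_mul]
  ring

lemma grad_smul (f : MvPolynomial (Fin 3) F) (d : ℕ) (hf : f.IsHomogeneous d) (s : F)
    (a : Fin 3 → F) : grad f (s • a) = s ^ (d - 1) • grad f a := by
  ext i
  simp only [grad, Pi.smul_apply, smul_eq_mul]
  exact hom_eval _ _ hf.pderiv _ _

lemma grad_euler (f : MvPolynomial (Fin 3) F) (d : ℕ) (hf : f.IsHomogeneous d)
    (a : Fin 3 → F) : grad f a ⬝ᵥ a = d * MvPolynomial.eval a f := by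
  have := congrArg (MvPolynomial.eval a) hf.sum_X_mul_pderiv
  simp only [map_sum, map_mul, MvPolynomial.eval_X, nsmul_eq_mul] at this
  rw [map_natCast] at this
  rw [← this]
  simp [dotProduct, grad, mul_comm]

/-- two multiplicities -/
lemma count_roots (p : Polynomial F) (d : ℕ) (hp : p ≠ 0) (hd : p.natDegree ≤ d)
    (S D : Finset F) (hS : ∀ t ∈ S, p.eval t = 0) (hDS : D ⊆ S)
    (hD : ∀ t ∈ D, (Polynomial.derivative p).eval t = 0) : S.card + D.card ≤ d := by
  classical
  have h : S.val + D.val ≤ p.roots := by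
    rw [Multiset.le_iff_count]
    intro t
    rw [Multiset.count_add, Polynomial.count_roots]
    have c1 := Multiset.nodup_iff_count_le_one.1 S.nodup t
    have c2 := Multiset.nodup_iff_count_le_one.1 D.nodup t
    by_cases htD : t ∈ D
    · have := (Polynomial.one_lt_rootMultiplicity_iff_isRoot hp).2 ⟨hS t (hDS htD), hD t htD⟩
      omega
    · have h0 : Multiset.count t D.val = 0 := Multiset.count_eq_zero.2 htD
      by_cases htS : t ∈ S
      · have := (Polynomial.rootMultiplicity_pos hp).2 (hS t htS)
        omega
      · have h0 : Multiset.count t S.val = 0 := Multiset.count_eq_zero.2 htS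
        omega
  have := Multiset.card_le_card h
  rw [Multiset.card_add] at this
  exact this.trans ((Polynomial.card_roots' p).trans hd)

end Poly

section Geom
open Configuration Finset
open scoped Classical LinearAlgebra.Projectivization

variable {F : Type} [Field F] [Fintype F]

instance fintypeP : Fintype (ℙ F (Fin 3 → F)) := Fintype.ofFinite _

lemma order_eq : ProjectivePlane.order (ℙ F (Fin 3 → F)) (ℙ F (Fin 3 → F)) = Fintype.card F := by
  have h1 := ProjectivePlane.card_points (ℙ F (Fin 3 → F)) (ℙ F (Fin 3 → F))
  have h2 := Projectivization.card_of_finrank F (Fin 3 → F) (n := 3) (by simp)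
  rw [← Nat.card_eq_fintype_card, h2, Nat.card_eq_fintype_card, Finset.sum_range_succ,
    Finset.sum_range_succ, Finset.sum_range_one] at h1
  simp only [pow_zero, pow_one] at h1
  set o := ProjectivePlane.order (ℙ F (Fin 3 → F)) (ℙ F (Fin 3 → F))
  rcases lt_trichotomy o (Fintype.card F) with h | h | h
  · nlinarith
  · exact h
  · nlinarith

lemma mem_rep (x l : ℙ F (Fin 3 → F)) : x ∈ l ↔ x.rep ⬝ᵥ l.rep = 0 := by
  rw [ofField.mem_iff]
  conv_lhs => rw [← x.mk_rep, ← l.mk_rep]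
  exact Projectivization.orthogonal_mk _ _

lemma li_zero {K : Type} [Field K] (w : Fin 3 → Fin 3 → K) (hw : LinearIndependent K w)
    (n : Fin 3 → K) (h : ∀ i, w i ⬝ᵥ n = 0) : n = 0 := by
  have hu : IsUnit (Matrix.of w) := Matrix.linearIndependent_rows_iff_isUnit.1 hw
  have h0 : (Matrix.of w).mulVec n = 0 := by
    ext i
    exact h i
  by_contra hn
  have h1 := Matrix.exists_mulVec_eq_zero_iff.1 ⟨n, hn, h0⟩
  rw [Matrix.isUnit_iff_isUnit_det, h1] at hu
  exact not_isUnit_zero hu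

lemma span_line (n a b x : Fin 3 → F) (hn : n ≠ 0) (hab : LinearIndependent F ![a, b])
    (ha : a ⬝ᵥ n = 0) (hb : b ⬝ᵥ n = 0) (hx : x ⬝ᵥ n = 0) : ∃ s t : F, x = s • a + t • b := by
  by_contra hcon
  have hli : LinearIndependent F ![x, a, b] := by
    refine linearIndependent_finCons.2 ⟨hab, fun hmem => hcon ?_⟩
    rw [Matrix.range_cons, Matrix.range_cons, Matrix.range_empty, Set.union_empty,
      Set.singleton_union, Submodule.mem_span_pair] at hmem
    obtain ⟨s, t, h⟩ := hmem
    exact ⟨s, t, h.symm⟩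
  exact hn (li_zero _ hli n (fun i => by fin_cases i <;> simpa))

/-- rational points of the curve -/
def Z (f : MvPolynomial (Fin 3) F) : Finset (ℙ F (Fin 3 → F)) :=
  univ.filter (fun x => MvPolynomial.eval x.rep f = 0)

/-- `f` restricted to the line `l` vanishes doubly at `x` -/
def Tang (f : MvPolynomial (Fin 3) F) (x l : ℙ F (Fin 3 → F)) : Prop :=
  x ∈ l ∧ ∀ y : Fin 3 → F, y ⬝ᵥ l.rep = 0 → grad f x.rep ⬝ᵥ y = 0

lemma mult (f : MvPolynomial (Fin 3) F) (d : ℕ) (hf : f.IsHomogeneous d) (l : ℙ F (Fin 3 → F))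
    (hb : ∃ b, b ∈ l ∧ b ∉ Z f) :
    cnt (Z f) l + ((Z f).filter (fun x => Tang f x l)).card ≤ d := by
  obtain ⟨b, hbl, hbZ⟩ := hb
  have hbf : MvPolynomial.eval b.rep f ≠ 0 := by simpa [Z] using hbZ
  by_cases hne : ((Z f).filter (fun x => x ∈ l)).Nonempty
  swap
  · have h0 : (Z f).filter (fun x => x ∈ l) = ∅ := not_nonempty_iff_eq_empty.1 hne
    have h1 : (Z f).filter (fun x => Tang f x l) = ∅ := by
      rw [eq_empty_iff_forall_notMem]
      intro x hx
      have : x ∈ (Z f).filter (fun x => x ∈ l) := by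
        simp only [mem_filter] at hx ⊢
        exact ⟨hx.1, hx.2.1⟩
      rw [h0] at this
      simp at this
    rw [cnt, h0, h1]
    simp
  obtain ⟨a, ha⟩ := hne
  rw [mem_filter] at ha
  have hab : a ≠ b := by rintro rfl; exact hbZ ha.1
  have hli : LinearIndependent F ![a.rep, b.rep] := by
    exact Projectivization.linearIndependent_pair_iff_ne.2 hab
  set p := restr f a.rep b.rep with hp
  have hdeg := restr_deg f a.rep b.rep d hf
  have hp0 : p ≠ 0 := by
    intro h
    rw [← hp, h] at hdeg
    exact hbf (by simpa using hdeg.2.symm)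
  have hpar : ∀ x : ℙ F (Fin 3 → F), ∃ t : F, x ∈ l → x ∈ Z f → ∃ s : F, s ≠ 0 ∧
      x.rep = s • (a.rep + t • b.rep) := by
    intro x
    by_cases hx : x ∈ l ∧ x ∈ Z f
    · obtain ⟨s, t, hst⟩ := span_line l.rep a.rep b.rep x.rep l.rep_nonzero hli
        ((mem_rep _ _).1 ha.2) ((mem_rep _ _).1 hbl) ((mem_rep _ _).1 hx.1)
      have hs : s ≠ 0 := by
        rintro rfl
        have h1 : MvPolynomial.eval x.rep f = 0 := by simpa [Z] using hx.2
        rw [zero_smul, zero_add] at hst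
        rw [hst, hom_eval f d hf] at h1
        have ht : t ≠ 0 := by
          rintro rfl
          exact x.rep_nonzero (by simpa using hst)
        exact (mul_ne_zero (pow_ne_zero _ ht) hbf) h1
      refine ⟨t / s, fun _ _ => ⟨s, hs, ?_⟩⟩
      rw [hst, smul_add, smul_smul, mul_div_cancel₀ _ hs]
    · exact ⟨0, fun h1 h2 => (hx ⟨h1, h2⟩).elim⟩
  choose τ hτ using hpar
  have hinj : ∀ x ∈ Z f, x ∈ l → ∀ y ∈ Z f, y ∈ l → τ x = τ y → x = y := by
    intro x hx hxl y hy hyl hxy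
    obtain ⟨s, hs, h1⟩ := hτ x hxl hx
    obtain ⟨s', hs', h2⟩ := hτ y hyl hy
    rw [← x.mk_rep, ← y.mk_rep, Projectivization.mk_eq_mk_iff']
    refine ⟨s / s', ?_⟩
    rw [h1, h2, hxy, smul_smul, div_mul_cancel₀ _ hs']
  have hfin := count_roots p d hp0 hdeg.1 (((Z f).filter (fun x => x ∈ l)).image τ)
    (((Z f).filter (fun x => Tang f x l)).image τ) ?_ ?_ ?_
  · rw [card_image_of_injOn, card_image_of_injOn] at hfin
    · exact hfin
    · intro x hx y hy
      simp only [coe_filter, Set.mem_ofPred_eq] at hx hy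
      exact hinj x hx.1 hx.2.1 y hy.1 hy.2.1
    · intro x hx y hy
      simp only [coe_filter, Set.mem_ofPred_eq] at hx hy
      exact hinj x hx.1 hx.2 y hy.1 hy.2
  · intro t ht
    simp only [mem_image, mem_filter] at ht
    obtain ⟨x, ⟨hx, hxl⟩, rfl⟩ := ht
    obtain ⟨s, hs, h1⟩ := hτ x hxl hx
    have h2 : MvPolynomial.eval x.rep f = 0 := by simpa [Z] using hx
    rw [h1, hom_eval f d hf] at h2
    rw [hp, restr_eval]
    exact (mul_eq_zero.1 h2).resolve_left (pow_ne_zero _ hs)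
  · apply image_subset_image
    intro x hx
    simp only [mem_filter] at hx ⊢
    exact ⟨hx.1, hx.2.1⟩
  · intro t ht
    simp only [mem_image, mem_filter] at ht
    obtain ⟨x, ⟨hx, hxl, hxT⟩, rfl⟩ := ht
    obtain ⟨s, hs, h1⟩ := hτ x hxl hx
    have h2 := hxT b.rep ((mem_rep _ _).1 hbl)
    rw [h1, grad_smul f d hf, smul_dotProduct, smul_eq_mul] at h2
    rw [hp, restr_deriv_eval]
    exact (mul_eq_zero.1 h2).resolve_left (pow_ne_zero _ hs)

lemma exists_tang (f : MvPolynomial (Fin 3) F) (d : ℕ) (hf : f.IsHomogeneous d)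
    (x : ℙ F (Fin 3 → F)) (hx : x ∈ Z f) : ∃ l, Tang f x l := by
  have hx0 : MvPolynomial.eval x.rep f = 0 := by simpa [Z] using hx
  by_cases hg : grad f x.rep = 0
  · have : 0 < (linesAt (ℙ F (Fin 3 → F)) x).card := by rw [card_linesAt]; omega
    obtain ⟨l, hl⟩ := card_pos.1 this
    simp only [linesAt, mem_filter, mem_univ, true_and] at hl
    exact ⟨l, hl, fun y _ => by simp [hg]⟩
  · refine ⟨Projectivization.mk F _ hg, ?_⟩
    obtain ⟨u, hu⟩ := Projectivization.exists_smul_eq_mk_rep F (grad f x.rep) hg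
    have key : ∀ y, y ⬝ᵥ (Projectivization.mk F _ hg).rep = 0 ↔ grad f x.rep ⬝ᵥ y = 0 := by
      intro y
      rw [← hu, dotProduct_smul, smul_eq_zero_iff_eq, dotProduct_comm]
    refine ⟨?_, fun y hy => (key y).1 hy⟩
    rw [mem_rep, key, grad_euler f d hf, hx0, mul_zero]

/-- The linear form of a line. -/
def lin (n : Fin 3 → F) : MvPolynomial (Fin 3) F := ∑ i, MvPolynomial.C (n i) * MvPolynomial.X i

lemma lin_hom (n : Fin 3 → F) : (lin n).IsHomogeneous 1 :=
  MvPolynomial.IsHomogeneous.sum _ _ _ (fun _ _ => MvPolynomial.isHomogeneous_C_mul_X _ _)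

lemma eval_lin (n x : Fin 3 → F) : MvPolynomial.eval x (lin n) = x ⬝ᵥ n := by
  simp [lin, dotProduct, mul_comm]

lemma factor (f : MvPolynomial (Fin 3) F) (d : ℕ) (hd : d ≤ Fintype.card F) (hd1 : 1 ≤ d)
    (hf : f.IsHomogeneous d)
    (l : ℙ F (Fin 3 → F)) (hl : ∀ x, x ∈ l → x ∈ Z f) :
    ∃ g : MvPolynomial (Fin 3) F, g.IsHomogeneous (d - 1) ∧ f = lin l.rep * g := by
  set n := l.rep with hn
  obtain ⟨j, hj⟩ : ∃ j, n j ≠ 0 := by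
    by_contra h
    push Not at h
    exact l.rep_nonzero (funext h)
  -- substitution
  let s : Fin 3 → MvPolynomial (Fin 3) F := fun i =>
    MvPolynomial.X i - if i = j then MvPolynomial.C (n j)⁻¹ * lin n else 0
  have hs1 : ∀ i, (s i).IsHomogeneous 1 := by
    intro i
    apply (MvPolynomial.isHomogeneous_X _ _).sub
    split_ifs
    · exact (lin_hom n).C_mul _
    · exact MvPolynomial.isHomogeneous_zero _ _ _
  have hdvd : ∀ p : MvPolynomial (Fin 3) F, lin n ∣ p - MvPolynomial.aeval s p := by
    intro p
    induction p using MvPolynomial.induction_on with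
    | C c => simp
    | add p q hp hq =>
      rw [map_add, add_sub_add_comm]
      exact dvd_add hp hq
    | mul_X p i hp =>
      rw [map_mul, MvPolynomial.aeval_X]
      have h2 : lin n ∣ MvPolynomial.X i - s i := by
        simp only [s, sub_sub_cancel]
        split_ifs
        · exact dvd_mul_left _ _
        · exact dvd_zero _
      have : p * MvPolynomial.X i - MvPolynomial.aeval s p * s i
        = (p - MvPolynomial.aeval s p) * MvPolynomial.X i
          + MvPolynomial.aeval s p * (MvPolynomial.X i - s i) := by ring
      rw [this]
      exact dvd_add (Dvd.dvd.mul_right hp _) (Dvd.dvd.mul_left h2 _)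
  have hzero : MvPolynomial.aeval s f = 0 := by
    have hh : (MvPolynomial.aeval s f).IsHomogeneous d := by
      simpa using hf.aeval s hs1
    apply hh.eq_zero_of_forall_eval_eq_zero_of_le_card
    · intro r
      have hev : MvPolynomial.eval r (MvPolynomial.aeval s f)
          = MvPolynomial.eval (fun i => MvPolynomial.eval r (s i)) f := by
        rw [MvPolynomial.aeval_def, MvPolynomial.eval₂_eq', map_sum, MvPolynomial.eval_eq']
        simp
      rw [hev]
      set y : Fin 3 → F := fun i => MvPolynomial.eval r (s i) with hy
      have hyn : y ⬝ᵥ n = 0 := by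
        have : ∀ i, y i = r i - if i = j then (n j)⁻¹ * (r ⬝ᵥ n) else 0 := by
          intro i
          simp only [hy, s]
          split_ifs <;> simp [eval_lin]
        simp only [dotProduct, this, sub_mul, Finset.sum_sub_distrib, ite_mul, zero_mul]
        rw [Finset.sum_ite_eq' univ j]
        simp only [mem_univ, if_true]
        field_simp
        simp [dotProduct]
      by_cases hy0 : y = 0
      · rw [hy0]
        have := hom_eval f d hf 0 0
        rwa [zero_smul, zero_pow (by omega), zero_mul] at this
      · obtain ⟨u, hu⟩ := Projectivization.exists_smul_eq_mk_rep F y hy0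
        have h1 : Projectivization.mk F y hy0 ∈ l := by
          rw [mem_rep, ← hu, smul_dotProduct, hyn, smul_zero]
        have h2 := hl _ h1
        simp only [Z, mem_filter, mem_univ, true_and] at h2
        rw [← hu] at h2
        have h3 := hom_eval f d hf (u : F) y
        rw [Units.smul_def] at h2
        rw [h2] at h3
        exact (mul_eq_zero.1 h3.symm).resolve_left (pow_ne_zero _ u.ne_zero)
    · simpa using hd
  have hfd := hdvd f
  rw [hzero, sub_zero] at hfd
  obtain ⟨g, hg⟩ := hfd
  refine ⟨MvPolynomial.homogeneousComponent (d - 1) g,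
    MvPolynomial.homogeneousComponent_isHomogeneous _ _, ?_⟩
  letI := MvPolynomial.gradedAlgebra (σ := Fin 3) (R := F)
  have h1 := DirectSum.coe_decompose_mul_of_left_mem_of_le
    (MvPolynomial.homogeneousSubmodule (Fin 3) F) (a := lin n) (b := g) (i := 1) (n := d)
    (lin_hom n) hd1
  rw [← hg] at h1
  have hdec : ∀ (p : MvPolynomial (Fin 3) F) (i : ℕ),
      (DirectSum.decompose (MvPolynomial.homogeneousSubmodule (Fin 3) F) p i :
        MvPolynomial (Fin 3) F) = MvPolynomial.homogeneousComponent i p :=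
    fun p i => MvPolynomial.decomposition.decompose'_apply p i
  rwa [hdec, hdec, MvPolynomial.homogeneousComponent_eq_self hf] at h1

end Geom

section CharTwo
open Configuration Finset
open scoped Classical LinearAlgebra.Projectivization

variable {F : Type} [Field F] [Fintype F]

/-- the key identity in characteristic two -/
def KeyId (f : MvPolynomial (Fin 3) F) : Prop :=
  ∃ c : Fin 3 → Fin 3 → F, ∀ a b : Fin 3 → F,
    grad f a ⬝ᵥ b = ∑ k, (∑ i, (crossProduct a b) i * c i k) * a k ^ 2

lemma keyId_sum {ι : Type} (s : Finset ι) (f : ι → MvPolynomial (Fin 3) F)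
    (h : ∀ i ∈ s, KeyId (f i)) : KeyId (∑ i ∈ s, f i) := by
  induction s using Finset.induction_on with
  | empty => exact ⟨0, fun a b => by simp [grad, dotProduct]⟩
  | insert i s hi ih =>
    obtain ⟨c, hc⟩ := h i (mem_insert_self _ _)
    obtain ⟨c', hc'⟩ := ih (fun j hj => h j (mem_insert_of_mem hj))
    refine ⟨c + c', fun a b => ?_⟩
    have h1 : grad (∑ i ∈ insert i s, f i) a = grad (f i) a + grad (∑ i ∈ s, f i) a := by
      ext j
      simp [grad, sum_insert hi]
    rw [h1, add_dotProduct, hc, hc', ← sum_add_distrib]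
    apply sum_congr rfl
    intro k _
    simp only [Pi.add_apply, mul_add, sum_add_distrib]
    ring

lemma keyId_monomial [CharP F 2] (m : Fin 3 →₀ ℕ) (r : F) (hm : m 0 + m 1 + m 2 = 4) :
    KeyId (MvPolynomial.monomial m r) := by
  refine ⟨fun i k => if (m i % 2 = 0 ∧ m (i + 1) % 2 = 1) ∧ m k / 2 = 1 then r else 0,
    fun a b => ?_⟩
  have h2 : (2 : F) = 0 := CharTwo.two_eq_zero
  have h3 : (3 : F) = 1 := by linear_combination h2
  have h4 : (4 : F) = 0 := by linear_combination 2 * h2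
  simp only [grad, dotProduct, Fin.sum_univ_three, pderiv_monomial, MvPolynomial.eval_monomial,
    crossProduct, LinearMap.mk₂_apply, Finsupp.prod_fintype, pow_zero, implies_true,
    Fin.prod_univ_three, Finsupp.tsub_apply, Finsupp.single_apply]
  rw [show (0 : Fin 3) + 1 = 1 from rfl, show (1 : Fin 3) + 1 = 2 from rfl,
    show (2 : Fin 3) + 1 = 0 from rfl]
  generalize m 0 = x at *
  generalize m 1 = y at *
  generalize m 2 = z at *
  have hx : x ≤ 4 := by omega
  have hy : y ≤ 4 := by omega
  obtain rfl : z = 4 - x - y := by omega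
  interval_cases x <;> interval_cases y <;> first
    | omega
    | (simp [h2, h3, h4, CharTwo.sub_eq_add]; try ring)


lemma keyId_quartic [CharP F 2] (f : MvPolynomial (Fin 3) F) (hf : f.IsHomogeneous 4) :
    KeyId f := by
  rw [← MvPolynomial.support_sum_monomial_coeff f]
  apply keyId_sum
  intro m hm
  apply keyId_monomial
  have h := hf.degree_eq_sum_deg_support hm
  have h2 : ∑ i ∈ m.support, m i = ∑ i, m i :=
    Finset.sum_subset (Finset.subset_univ _) (fun i _ hi => by simpa using hi)
  rw [h2, Fin.sum_univ_three] at h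
  exact h.symm

lemma exists_sqrt [CharP F 2] (x : F) : ∃ y, y ^ 2 = x := by
  obtain ⟨y, hy⟩ := (isSquare_of_charTwo' x)
  exact ⟨y, by rw [hy, sq]⟩

/-- Fixed vectors of a Frobenius-semilinear problem: at most eight. -/
lemma card_W [CharP F 2] (g : (Fin 3 → F) →ₗ[F] (Fin 3 → F)) :
    (univ.filter (fun w : Fin 3 → F => g w = fun k => w k ^ 2)).card ≤ 8 := by
  set W := univ.filter (fun w : Fin 3 → F => g w = fun k => w k ^ 2) with hW
  obtain ⟨b, hbW, hspan, hli⟩ := exists_linearIndependent F (W : Set (Fin 3 → F))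
  lift b to Finset (Fin 3 → F) using Set.toFinite b
  have hbc : b.card ≤ 3 := by
    have := hli.fintype_card_le_finrank
    simpa using this
  have hsub : W ⊆ b.powerset.image (fun s => ∑ x ∈ s, x) := by
    intro w hw
    have hws : w ∈ Submodule.span F (b : Set (Fin 3 → F)) := by
      rw [hspan]
      exact Submodule.subset_span hw
    rw [Submodule.mem_span_finset] at hws
    obtain ⟨c, -, hc⟩ := hws
    choose δ hδ using fun x => exists_sqrt (c x - c x ^ 2)
    have hg : ∀ x ∈ b, ∀ k, g x k = x k ^ 2 := by
      intro x hx k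
      have : x ∈ W := hbW hx
      simp only [hW, mem_filter, mem_univ, true_and] at this
      rw [this]
    have hgw : ∀ k, g w k = w k ^ 2 := by
      intro k
      simp only [hW, mem_filter, mem_univ, true_and] at hw
      rw [hw]
    have h0 : ∑ x ∈ b, δ x • x = 0 := by
      ext k
      have h1 : (∑ x ∈ b, δ x * x k) ^ 2 = 0 := by
        rw [sum_pow_char 2]
        have h2 : w k = ∑ x ∈ b, c x * x k := by rw [← hc]; simp
        have h3 : g w k = ∑ x ∈ b, c x * x k ^ 2 := by
          rw [← hc, map_sum, Finset.sum_apply]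
          apply sum_congr rfl
          intro x hx
          simp [hg x hx k]
        have h4 := hgw k
        rw [h3, h2, sum_pow_char 2] at h4
        rw [← sub_eq_zero, ← sum_sub_distrib] at h4
        rw [← h4]
        apply sum_congr rfl
        intro x _
        rw [mul_pow, hδ]
        ring
      simpa using h1
    have hδ0 : ∀ x ∈ b, δ x = 0 := by
      have := linearIndependent_iff'.1 hli univ (fun x => δ x) (by
        rw [← h0]
        exact Finset.sum_coe_sort b (fun x => δ x • x))
      intro x hx
      exact this ⟨x, hx⟩ (mem_univ _)
    have hc01 : ∀ x ∈ b, c x = 0 ∨ c x = 1 := by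
      intro x hx
      have h1 := hδ x
      rw [hδ0 x hx] at h1
      have h2 : c x * (1 - c x) = 0 := by linear_combination -h1
      rcases mul_eq_zero.1 h2 with h | h
      · exact Or.inl h
      · exact Or.inr (sub_eq_zero.1 h).symm
    rw [mem_image]
    refine ⟨b.filter (fun x => c x = 1), by simp, ?_⟩
    rw [← hc, sum_filter]
    apply sum_congr rfl
    intro x hx
    rcases hc01 x hx with h | h <;> simp [h]
  calc W.card ≤ _ := card_le_card hsub
    _ ≤ b.powerset.card := card_image_le
    _ = 2 ^ b.card := card_powerset b
    _ ≤ 2 ^ 3 := Nat.pow_le_pow_right (by norm_num) hbc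

/-- two vectors orthogonal to two independent vectors are proportional -/
lemma prop_of_orth (n a b h : Fin 3 → F) (hn : n ≠ 0) (hab : LinearIndependent F ![a, b])
    (ha : a ⬝ᵥ n = 0) (hb : b ⬝ᵥ n = 0) (ha' : a ⬝ᵥ h = 0) (hb' : b ⬝ᵥ h = 0) :
    ∃ s : F, h = s • n := by
  have h1 := ofField.crossProduct_eq_zero_of_dotProduct_eq_zero ha hb ha' hb'
  have h2 : crossProduct a b ≠ 0 := crossProduct_ne_zero_iff_linearIndependent.2 hab
  have h3 := h1.resolve_left h2
  by_contra hcon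
  push Not at hcon
  apply crossProduct_ne_zero_iff_linearIndependent.2 _ h3
  rw [LinearIndependent.pair_iff' hn]
  intro s hs
  exact hcon s hs.symm

lemma quartic_contra [CharP F 2] (f : MvPolynomial (Fin 3) F) (hf : f.IsHomogeneous 4)
    (hq : 6 ≤ Fintype.card F) (hK : (Z f).card = 3 * Fintype.card F + 2)
    (hline : ∀ l : ℙ F (Fin 3 → F), ∃ b, b ∈ l ∧ b ∉ Z f)
    (S : Finset (ℙ F (Fin 3 → F))) (hS : (Z f).card ≤ 2 * S.card)
    (hST : ∀ l ∈ S, ∃ A B, A ≠ B ∧ Tang f A l ∧ Tang f B l) : False := by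
  obtain ⟨c, hc⟩ := keyId_quartic f hf
  let g : (Fin 3 → F) →ₗ[F] (Fin 3 → F) := Matrix.vecMulLinear (Matrix.of c)
  have hg : ∀ n k, g n k = ∑ i, n i * c i k := fun n k => rfl
  have hc' : ∀ a b : Fin 3 → F, grad f a ⬝ᵥ b = ∑ k, g (crossProduct a b) k * a k ^ 2 := by
    intro a b
    rw [hc]
    simp only [hg]
  -- eigenvector property
  have heig : ∀ l ∈ S, ∃ κ : F, ∀ k, g l.rep k = κ * l.rep k ^ 2 := by
    intro l hl
    obtain ⟨A, B, hAB, hA, hB⟩ := hST l hl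
    have hli : LinearIndependent F ![A.rep, B.rep] :=
      Projectivization.linearIndependent_pair_iff_ne.2 hAB
    have hAl := (mem_rep _ _).1 hA.1
    have hBl := (mem_rep _ _).1 hB.1
    have hcr : crossProduct A.rep B.rep ≠ 0 := crossProduct_ne_zero_iff_linearIndependent.2 hli
    obtain ⟨s, hs⟩ := prop_of_orth (crossProduct A.rep B.rep) A.rep B.rep l.rep hcr hli
      (by simp) (by simp) hAl hBl
    choose h hh using fun k => exists_sqrt (g l.rep k)
    have hortho : ∀ C D : Fin 3 → F, grad f C ⬝ᵥ D = 0 → (∃ s : F, l.rep = s • crossProduct C D) →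
        C ⬝ᵥ h = 0 := by
      rintro C D hCD ⟨s, hs⟩
      rw [hc'] at hCD
      have : (C ⬝ᵥ h) ^ 2 = 0 := by
        rw [dotProduct, sum_pow_char 2]
        calc ∑ i, (C i * h i) ^ 2 = ∑ i, s * (g (crossProduct C D) i * C i ^ 2) := by
              apply sum_congr rfl
              intro i _
              rw [mul_pow, hh, hs, map_smul, Pi.smul_apply, smul_eq_mul]
              ring
          _ = 0 := by rw [← mul_sum, hCD, mul_zero]
      simpa using this
    have hAh := hortho A.rep B.rep (hA.2 _ hBl) ⟨s, hs⟩
    have hBh := hortho B.rep A.rep (hB.2 _ hAl) ⟨-s, by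
      rw [neg_smul, ← smul_neg, cross_anticomm]; exact hs⟩
    obtain ⟨t, ht⟩ := prop_of_orth l.rep A.rep B.rep h l.rep_nonzero hli hAl hBl hAh hBh
    refine ⟨t ^ 2, fun k => ?_⟩
    rw [← hh, ht, Pi.smul_apply, smul_eq_mul, mul_pow]
  choose! κ hκ using heig
  -- at most one zero eigenvalue
  have hone : (S.filter (fun l => κ l = 0)).card ≤ 1 := by
    rw [card_le_one]
    intro l hl m hm
    by_contra hlm
    rw [mem_filter] at hl hm
    have hgl : g l.rep = 0 := by ext k; rw [hκ l hl.1, hl.2]; simp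
    have hgm : g m.rep = 0 := by ext k; rw [hκ m hm.1, hm.2]; simp
    have hli : LinearIndependent F ![l.rep, m.rep] :=
      Projectivization.linearIndependent_pair_iff_ne.2 hlm
    obtain ⟨B, hBl, hBm⟩ : ∃ B : ℙ F (Fin 3 → F), B ∈ l ∧ B ∈ m :=
      ⟨HasPoints.mkPoint hlm, HasPoints.mkPoint_ax hlm⟩
    have hcnt : ∀ n ∈ linesAt (ℙ F (Fin 3 → F)) B, cnt (Z f) n ≤ 2 := by
      intro n hn
      simp only [linesAt, mem_filter, mem_univ, true_and] at hn
      obtain ⟨s, t, hst⟩ := span_line B.rep l.rep m.rep n.rep B.rep_nonzero hli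
        (by rw [dotProduct_comm]; exact (mem_rep _ _).1 hBl)
        (by rw [dotProduct_comm]; exact (mem_rep _ _).1 hBm)
        (by rw [dotProduct_comm]; exact (mem_rep _ _).1 hn)
      have hgn : g n.rep = 0 := by rw [hst, map_add, map_smul, map_smul, hgl, hgm]; simp
      have hT : ∀ A, A ∈ n → Tang f A n := by
        intro A hA
        refine ⟨hA, fun y hy => ?_⟩
        rw [hc']
        by_cases hy0 : crossProduct A.rep y = 0
        · simp [hy0]
        · have hli2 := crossProduct_ne_zero_iff_linearIndependent.1 hy0
          obtain ⟨u, hu⟩ := prop_of_orth n.rep A.rep y (crossProduct A.rep y) n.rep_nonzero hli2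
            ((mem_rep _ _).1 hA) hy (by simp) (by simp)
          rw [hu, map_smul, hgn]
          simp
      have hmul := mult f 4 hf n (hline n)
      have heq : (Z f).filter (fun x => Tang f x n) = (Z f).filter (fun x => x ∈ n) := by
        apply filter_congr
        intro x _
        exact ⟨fun h => h.1, hT x⟩
      rw [heq] at hmul
      change cnt (Z f) n + cnt (Z f) n ≤ 4 at hmul
      omega
    have h1 := sum_lines_le (L := ℙ F (Fin 3 → F)) (Z f) B
    have h2 := sum_le_sum hcnt
    rw [sum_const, card_linesAt, order_eq, smul_eq_mul] at h2
    omega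
  have hrest : (S.filter (fun l => ¬ κ l = 0)).card ≤ 8 := by
    refine le_trans ?_ (card_W g)
    apply card_le_card_of_injOn (fun l => κ l • l.rep)
    · intro l hl
      simp only [coe_filter, Set.mem_ofPred_eq] at hl
      simp only [coe_filter, Set.mem_ofPred_eq, mem_univ, true_and]
      ext k
      rw [map_smul, Pi.smul_apply, hκ l hl.1, Pi.smul_apply, smul_eq_mul, smul_eq_mul]
      ring
    · intro l hl m hm hlm
      simp only [coe_filter, Set.mem_ofPred_eq] at hl hm
      simp only at hlm
      rw [← l.mk_rep, ← m.mk_rep, Projectivization.mk_eq_mk_iff']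
      refine ⟨(κ l)⁻¹ * κ m, ?_⟩
      rw [mul_smul, ← hlm, smul_smul, inv_mul_cancel₀ hl.2, one_smul]
  have := card_filter_add_card_filter_not (s := S) (fun l => κ l = 0)
  omega

end CharTwo

section Final
open Configuration Finset
open scoped Classical LinearAlgebra.Projectivization

variable {F : Type} [Field F] [Fintype F]

lemma linefree (f : MvPolynomial (Fin 3) F) (d : ℕ) (hf : f.IsHomogeneous d)
    (hd : 2 ≤ d ∧ d ≤ 5) (hq : 5 ≤ Fintype.card F)
    (hline : ∀ l : ℙ F (Fin 3 → F), ∃ b, b ∈ l ∧ b ∉ Z f)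
    (hN : (d - 1) * Fintype.card F + d ≤ (Z f).card + 2)
    (hN2 : d = 2 → Fintype.card F + 2 ≤ (Z f).card)
    (hN3 : d = 3 → 2 * Fintype.card F + 2 ≤ (Z f).card) : False := by
  have hex : ∀ x : ℙ F (Fin 3 → F), ∃ l, x ∈ Z f → Tang f x l := by
    intro x
    by_cases hx : x ∈ Z f
    · obtain ⟨l, hl⟩ := exists_tang f d hf x hx
      exact ⟨l, fun _ => hl⟩
    · exact ⟨x, fun h => absurd h hx⟩
  choose T hT using hex
  have hne : (Z f).Nonempty := by
    rw [← card_pos]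
    have : Fintype.card F ≤ (d - 1) * Fintype.card F :=
      Nat.le_mul_of_pos_left _ (by omega)
    omega
  obtain ⟨hd4, hK, hall⟩ := comb (Z f) T d (Fintype.card F) order_eq.symm hne
    (fun A hA => (hT A hA).1)
    (fun l => by
      refine le_trans (Nat.add_le_add_left (card_le_card ?_) _) (mult f d hf l (hline l))
      intro x hx
      rw [mem_filter] at hx ⊢
      exact ⟨hx.1, hx.2 ▸ hT x hx.1⟩) hd hN hN2 hN3
  subst hd4
  have hfib : ∀ l ∈ (Z f).image T, ((Z f).filter (fun x => T x = l)).card = 2 := by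
    intro l hl
    obtain ⟨A, hA, rfl⟩ := mem_image.1 hl
    rw [← (hall A hA).1, cnt]
    congr 1
    ext B
    simp only [mem_filter]
    constructor
    · rintro ⟨hB, h⟩
      exact ⟨hB, h ▸ (hT B hB).1⟩
    · rintro ⟨hB, h⟩
      exact ⟨hB, (hall A hA).2 B hB h⟩
  have hS : (Z f).card = 2 * ((Z f).image T).card := by
    rw [card_eq_sum_card_image T (Z f), sum_congr rfl hfib, sum_const, smul_eq_mul, mul_comm]
  have hev : Fintype.card F % 2 = 0 := by omega
  have hch : ringChar F = 2 := FiniteField.even_card_iff_char_two.2 hev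
  haveI : CharP F 2 := hch ▸ ringChar.charP F
  refine quartic_contra f hf (by omega) hK hline ((Z f).image T) hS.le ?_
  intro l hl
  obtain ⟨A, B, hAB, h⟩ := card_eq_two.1 (hfib l hl)
  have hA : A ∈ (Z f).filter (fun x => T x = l) := by rw [h]; simp
  have hB : B ∈ (Z f).filter (fun x => T x = l) := by rw [h]; simp
  rw [mem_filter] at hA hB
  exact ⟨A, B, hAB, hA.2 ▸ hT A hA.1, hB.2 ▸ hT B hB.1⟩

lemma aeval_lin_ne {E : Type} [Field E] [Fintype E] [Algebra F E] (v : Fin 3 → E)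
    (hv : LinearIndependent E ![v, fun i => v i ^ Fintype.card F,
      fun i => v i ^ Fintype.card F ^ 2])
    (n : Fin 3 → F) (hn : n ≠ 0) : MvPolynomial.aeval v (lin n) ≠ 0 := by
  intro h
  have h0 : ∑ i, v i * algebraMap F E (n i) = 0 := by
    rw [← h]
    simp [lin, mul_comm]
  have h1 : ∀ w : Fin 3 → E, ∑ i, w i * algebraMap F E (n i) = 0 →
      ∑ i, w i ^ Fintype.card F * algebraMap F E (n i) = 0 := by
    intro w hw
    have := congrArg (FiniteField.frobeniusAlgHom F E) hw
    rw [map_sum, map_zero] at this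
    simpa [FiniteField.frobeniusAlgHom_apply, mul_pow, ← map_pow, FiniteField.pow_card] using this
  have h2 := h1 _ h0
  have h3 := h1 _ h2
  have := li_zero _ hv (fun i => algebraMap F E (n i)) (by
    intro i
    fin_cases i
    · exact h0
    · exact h2
    · simp only [← pow_mul, ← sq] at h3
      exact h3)
  apply hn
  ext i
  have := congrFun this i
  simpa using this

lemma deg_one (f : MvPolynomial (Fin 3) F) (hf : f.IsHomogeneous 1) : ∃ n, f = lin n := by
  refine ⟨fun i => (MvPolynomial.pderiv i f).coeff 0, ?_⟩
  have h := hf.sum_X_mul_pderiv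
  rw [one_smul] at h
  conv_lhs => rw [← h]
  unfold lin
  apply sum_congr rfl
  intro i _
  have h0 : (MvPolynomial.pderiv i f).IsHomogeneous 0 := hf.pderiv
  have h1 := MvPolynomial.totalDegree_eq_zero_iff_eq_C.1
    ((MvPolynomial.totalDegree_zero_iff_isHomogeneous _).2 h0)
  rw [mul_comm]
  exact congrArg (· * MvPolynomial.X i) h1

lemma Z_mul (l : ℙ F (Fin 3 → F)) (g : MvPolynomial (Fin 3) F) :
    Z (lin l.rep * g) = univ.filter (fun x => x ∈ l) ∪ Z g := by
  ext x
  simp [Z, eval_lin, mem_rep]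

lemma card_line (l : ℙ F (Fin 3 → F)) :
    (univ.filter (fun x : ℙ F (Fin 3 → F) => x ∈ l)).card = Fintype.card F + 1 := by
  have h := ProjectivePlane.pointCount_eq (ℙ F (Fin 3 → F)) l
  rw [order_eq] at h
  rw [← h, pointCount, Nat.card_eq_fintype_card, Fintype.card_subtype]

lemma main_ind {E : Type} [Field E] [Fintype E] [Algebra F E] (v : Fin 3 → E)
    (hv : LinearIndependent E ![v, fun i => v i ^ Fintype.card F,
      fun i => v i ^ Fintype.card F ^ 2]) (hq : 5 ≤ Fintype.card F) (d : ℕ) :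
    d + 1 ≤ 5 → ∀ f : MvPolynomial (Fin 3) F, f.IsHomogeneous (d + 1) → f ≠ 0 →
      MvPolynomial.aeval v f = 0 → 1 ≤ d ∧ (Z f).card ≤ d * Fintype.card F + 2 := by
  induction d with
  | zero =>
    intro _ f hf h0 hfv
    obtain ⟨n, rfl⟩ := deg_one f hf
    exfalso
    refine aeval_lin_ne v hv n ?_ hfv
    rintro rfl
    exact h0 (by simp [lin])
  | succ d ih =>
    intro hd f hf h0 hfv
    refine ⟨by omega, ?_⟩
    by_cases hline : ∀ l : ℙ F (Fin 3 → F), ∃ b, b ∈ l ∧ b ∉ Z f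
    · by_contra hcon
      push Not at hcon
      refine linefree f (d + 1 + 1) hf (by omega) hq hline ?_ ?_ ?_
      · simp only [Nat.add_sub_cancel]; omega
      · intro h
        obtain rfl : d = 0 := by omega
        omega
      · intro h
        obtain rfl : d = 1 := by omega
        omega
    · push Not at hline
      obtain ⟨l, hl⟩ := hline
      obtain ⟨g, hg, rfl⟩ := factor f (d + 1 + 1) (by omega) (by omega) hf l hl
      simp only [Nat.add_sub_cancel] at hg
      have hg0 : g ≠ 0 := right_ne_zero_of_mul h0
      have hgv : MvPolynomial.aeval v g = 0 := by
        rw [map_mul] at hfv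
        exact (mul_eq_zero.1 hfv).resolve_left (aeval_lin_ne v hv _ l.rep_nonzero)
      obtain ⟨hd1, hgc⟩ := ih (by omega) g hg hg0 hgv
      rw [Z_mul]
      have hcl := card_line l
      have hu := card_union_add_card_inter (univ.filter (fun x => x ∈ l)) (Z g)
      have hmul : (d + 1) * Fintype.card F = d * Fintype.card F + Fintype.card F := by ring
      by_cases hline : ∀ l : ℙ F (Fin 3 → F), ∃ b, b ∈ l ∧ b ∉ Z g
      · by_contra hcon
        push Not at hcon
        refine linefree g (d + 1) hg (by omega) hq hline ?_ ?_ ?_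
        · simp only [Nat.add_sub_cancel]; omega
        · intro h
          obtain rfl : d = 1 := by omega
          omega
        · intro h
          obtain rfl : d = 2 := by omega
          omega
      · push Not at hline
        obtain ⟨m, hm⟩ := hline
        have hp : ∃ x, x ∈ l ∧ x ∈ m := by
          by_cases hlm : l = m
          · subst hlm
            have : 0 < (univ.filter (fun x : ℙ F (Fin 3 → F) => x ∈ l)).card := by omega
            obtain ⟨x, hx⟩ := card_pos.1 this
            rw [mem_filter] at hx
            exact ⟨x, hx.2, hx.2⟩
          · exact ⟨_, HasPoints.mkPoint_ax hlm⟩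
        obtain ⟨x, hxl, hxm⟩ := hp
        have : 0 < ((univ.filter (fun x => x ∈ l)) ∩ Z g).card := by
          rw [card_pos]
          exact ⟨x, by simp [hxl, hm x hxm]⟩
        omega

end Final

/-- For `q ≥ 5`, a plane quintic over `F_q` passing through a degree-3 closed point not on
any `F_q`-rational line has at most `4q + 2` rational points. -/
theorem stmt_16 (q : ℕ) (hq : IsPrimePow q) (hq5 : 5 ≤ q)
    (F E : Type) [Field F] [Fintype F] [Field E] [Fintype E] [Algebra F E]
    (hF : Fintype.card F = q) (hE : Fintype.card E = q ^ 3)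
    -- `v` represents a degree-3 closed point of `P²`: its three Frobenius conjugates are
    -- pairwise distinct and non-collinear (equivalently, linearly independent).
    (v : Fin 3 → E)
    (hv : LinearIndependent E ![v, fun i => v i ^ q, fun i => v i ^ q ^ 2]) :
    ∀ f : MvPolynomial (Fin 3) F, f ≠ 0 → f.IsHomogeneous 5 →
      MvPolynomial.aeval v f = 0 →
      {x : Projectivization F (Fin 3 → F) | MvPolynomial.eval x.rep f = 0}.ncard ≤ 4 * q + 2 := by
  intro f h0 hf hfv
  subst hF
  have h := (main_ind v hv hq5 4 le_rfl f hf h0 hfv).2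
  have hs : {x : Projectivization F (Fin 3 → F) | MvPolynomial.eval x.rep f = 0}
      = (Z f : Set (Projectivization F (Fin 3 → F))) := by
    ext x
    simp [Z]
  rw [hs, Set.ncard_coe_finset]
  exact h
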